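/- For any finite graph G=(V,E), min over nonempty subsets S ⊆ V with E(S) ≠ ∅ of (|S|−1)/|E(S)| equals min over nonempty F ⊆ E of (|V(F)|−c(F))/|F|, where V(F) is the set of endpoints of edges in F and c(F) is the number of connected components of the subgraph (V(F), F). -/

import Mathlib

open scoped Classical

/-- The number of connected components of the subgraph `(V(F), F)` determined by a set
of edges `F`: connected components of the graph with edge set `F`, restricted to the
set of endpoints of edges of `F`. -/
noncomputable def numComponents {V : Type*} (F : Finset (Sym2 V)) : ℕ :=
  Nat.card ((SimpleGraph.fromEdgeSet (F : Set (Sym2 V))).induce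
    {v : V | ∃ e ∈ F, v ∈ e}).ConnectedComponent

/-!
Taking `F = E(S)` gives `V(F) ⊆ S` and `c(F) ≥ 1`, so every subset ratio dominates an edge-set
ratio. Conversely, if `C₁, …, Cₖ` are the vertex sets of the components of `(V(F), F)`, then
`|V(F)| - c(F) = ∑ (|Cᵢ| - 1)` and `|F| ≤ ∑ |E(Cᵢ)|`, so by the mediant inequality some `Cᵢ` has
`(|Cᵢ| - 1) / |E(Cᵢ)| ≤ (|V(F)| - c(F)) / |F|`.
-/

open Finset

theorem exists_div_le_sum_div_sum {ι K : Type*} [Field K] [LinearOrder K] [IsStrictOrderedRing K]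
    {s : Finset ι} (hs : s.Nonempty) (a : ι → K) {b : ι → K} (hb : ∀ i ∈ s, 0 < b i) :
    ∃ i ∈ s, a i / b i ≤ (∑ j ∈ s, a j) / ∑ j ∈ s, b j := by
  have hsum : ∑ i ∈ s, a i = ∑ i ∈ s, (∑ j ∈ s, a j) / (∑ j ∈ s, b j) * b i := by
    rw [← mul_sum, div_mul_cancel₀ _ (sum_pos hb hs).ne']
  obtain ⟨i, hi, hle⟩ := exists_le_of_sum_le hs hsum.le
  exact ⟨i, hi, (div_le_iff₀ (hb i hi)).2 hle⟩

theorem card_eq_sum_card_supp {V : Type*} [Fintype V] (H : SimpleGraph V)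
    [Fintype H.ConnectedComponent] [∀ c : H.ConnectedComponent, Fintype c.supp] :
    Fintype.card V = ∑ c : H.ConnectedComponent, #c.supp.toFinset := by
  rw [← card_univ, card_eq_sum_card_fiberwise (f := H.connectedComponentMk) (t := univ)
    fun _ _ ↦ mem_coe.2 (mem_univ _)]
  refine sum_congr rfl fun c _ ↦ congrArg card ?_
  ext v
  simp only [mem_filter, mem_univ, true_and, Set.mem_toFinset,
    SimpleGraph.ConnectedComponent.mem_supp_iff]

section

variable {V : Type*}

/-- The set `E(S)` of edges in `E` with both endpoints in the finite set `S`. The edge set `E` may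
be infinite and may contain loops. -/
noncomputable def inducedEdges (E : Set (Sym2 V)) (S : Finset V) : Finset (Sym2 V) :=
  {e ∈ S.sym2 | e ∈ E}

/-- The set `V(F)` of endpoints of the edges in `F`. -/
noncomputable def endpoints (F : Finset (Sym2 V)) : Finset V :=
  F.biUnion Sym2.toFinset

/-- The graph `(V(F), F)`, whose connected components are counted by `numComponents F`. Loops in
`F` contribute vertices but no adjacencies. -/
abbrev edgeSubgraph (F : Finset (Sym2 V)) : SimpleGraph {v : V | ∃ e ∈ F, v ∈ e} :=
  (SimpleGraph.fromEdgeSet (F : Set (Sym2 V))).induce {v : V | ∃ e ∈ F, v ∈ e}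

/-- The set of ratios `(|S| - 1) / |E(S)|` over finite vertex sets `S` inducing an edge of `E`. -/
def subsetRatios (E : Set (Sym2 V)) : Set ℝ :=
  {r | ∃ S : Finset V, S.Nonempty ∧ (inducedEdges E S).Nonempty ∧
    r = ((#S : ℝ) - 1) / #(inducedEdges E S)}

/-- The set of ratios `(|V(F)| - c(F)) / |F|` over nonempty finite sets `F` of edges of `E`. -/
def edgeSetRatios (E : Set (Sym2 V)) : Set ℝ :=
  {r | ∃ F : Finset (Sym2 V), (F : Set (Sym2 V)) ⊆ E ∧ F.Nonempty ∧
    r = ((#(endpoints F) : ℝ) - numComponents F) / #F}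

variable {E : Set (Sym2 V)} {S : Finset V} {F : Finset (Sym2 V)} {e : Sym2 V} {v : V}

theorem mem_inducedEdges : e ∈ inducedEdges E S ↔ e ∈ E ∧ ∀ v ∈ e, v ∈ S := by
  rw [inducedEdges, mem_filter, mem_sym2_iff, and_comm]

theorem mem_endpoints : v ∈ endpoints F ↔ ∃ e ∈ F, v ∈ e := by
  simp only [endpoints, mem_biUnion, Sym2.mem_toFinset]

noncomputable instance fintypeEndpoints (F : Finset (Sym2 V)) :
    Fintype {v : V | ∃ e ∈ F, v ∈ e} :=
  Fintype.ofFinset (endpoints F) fun _ ↦ mem_endpoints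

theorem endpoints_inducedEdges_subset : endpoints (inducedEdges E S) ⊆ S := fun v hv ↦ by
  obtain ⟨e, he, hve⟩ := mem_endpoints.1 hv
  exact (mem_inducedEdges.1 he).2 v hve

theorem nonempty_connectedComponent_edgeSubgraph (hF : F.Nonempty) :
    Nonempty (edgeSubgraph F).ConnectedComponent := by
  obtain ⟨e, he⟩ := hF
  exact ⟨(edgeSubgraph F).connectedComponentMk ⟨_, e, he, e.out_fst_mem⟩⟩

theorem numComponents_pos (hF : F.Nonempty) : 0 < numComponents F :=
  have := nonempty_connectedComponent_edgeSubgraph hF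
  Nat.card_pos (α := (edgeSubgraph F).ConnectedComponent)

/-- The vertex set in `V` of a connected component of `(V(F), F)`. -/
noncomputable def componentVertices (c : (edgeSubgraph F).ConnectedComponent) : Finset V :=
  c.supp.toFinset.map (Function.Embedding.subtype _)

theorem mem_componentVertices {c : (edgeSubgraph F).ConnectedComponent} :
    v ∈ componentVertices c ↔
      ∃ hv : ∃ e ∈ F, v ∈ e, (edgeSubgraph F).connectedComponentMk ⟨v, hv⟩ = c := by
  simp [componentVertices]

theorem card_endpoints_eq_sum_card_componentVertices (F : Finset (Sym2 V)) :
    #(endpoints F) = ∑ c : (edgeSubgraph F).ConnectedComponent, #(componentVertices c) := by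
  simp only [componentVertices, card_map]
  rw [← card_eq_sum_card_supp, Fintype.card_ofFinset]

theorem connectedComponentMk_eq_of_mem_of_mem {u v : V} (he : e ∈ F) (hu : u ∈ e) (hv : v ∈ e) :
    (edgeSubgraph F).connectedComponentMk ⟨u, e, he, hu⟩ =
      (edgeSubgraph F).connectedComponentMk ⟨v, e, he, hv⟩ := by
  by_cases huv : u = v
  · subst huv
    rfl
  · obtain rfl := (Sym2.mem_and_mem_iff huv).1 ⟨hu, hv⟩
    have hadj : (edgeSubgraph F).Adj ⟨u, _, he, hu⟩ ⟨v, _, he, hv⟩ :=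
      (SimpleGraph.fromEdgeSet_adj _).2 ⟨he, huv⟩
    exact SimpleGraph.ConnectedComponent.sound hadj.reachable

theorem mem_inducedEdges_componentVertices (hFE : (F : Set (Sym2 V)) ⊆ E) (he : e ∈ F)
    (hv : v ∈ e) :
    e ∈ inducedEdges E
      (componentVertices ((edgeSubgraph F).connectedComponentMk ⟨v, e, he, hv⟩)) :=
  mem_inducedEdges.2 ⟨hFE he, fun _ hu ↦
    mem_componentVertices.2 ⟨⟨e, he, hu⟩, connectedComponentMk_eq_of_mem_of_mem he hu hv⟩⟩

theorem componentVertices_nonempty (c : (edgeSubgraph F).ConnectedComponent) :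
    (componentVertices c).Nonempty := by
  obtain ⟨⟨v, hv⟩, hvc⟩ := c.nonempty_supp
  exact ⟨v, mem_componentVertices.2 ⟨hv, hvc⟩⟩

theorem inducedEdges_componentVertices_nonempty (hFE : (F : Set (Sym2 V)) ⊆ E)
    (c : (edgeSubgraph F).ConnectedComponent) :
    (inducedEdges E (componentVertices c)).Nonempty := by
  obtain ⟨⟨v, e, he, hv⟩, rfl⟩ := c.nonempty_supp
  exact ⟨e, mem_inducedEdges_componentVertices hFE he hv⟩

theorem card_le_sum_card_inducedEdges_componentVertices (hFE : (F : Set (Sym2 V)) ⊆ E) :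
    #F ≤ ∑ c : (edgeSubgraph F).ConnectedComponent, #(inducedEdges E (componentVertices c)) := by
  have hcover : F ⊆ univ.biUnion fun c : (edgeSubgraph F).ConnectedComponent ↦
      inducedEdges E (componentVertices c) := fun e he ↦
    mem_biUnion.2 ⟨_, mem_univ _, mem_inducedEdges_componentVertices hFE he e.out_fst_mem⟩
  exact (card_le_card hcover).trans card_biUnion_le

theorem sum_card_componentVertices_sub_one (F : Finset (Sym2 V)) :
    ∑ c : (edgeSubgraph F).ConnectedComponent, ((#(componentVertices c) : ℝ) - 1) =
      #(endpoints F) - numComponents F := by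
  rw [sum_sub_distrib, card_endpoints_eq_sum_card_componentVertices, Nat.cast_sum, numComponents,
    Nat.card_eq_fintype_card, sum_const, card_univ, nsmul_one]

theorem card_sub_one_nonneg (hS : S.Nonempty) : (0 : ℝ) ≤ #S - 1 :=
  sub_nonneg.2 (Nat.one_le_cast.2 hS.card_pos)

theorem exists_componentVertices_ratio_le (hFE : (F : Set (Sym2 V)) ⊆ E) (hF : F.Nonempty) :
    ∃ c : (edgeSubgraph F).ConnectedComponent,
      ((#(componentVertices c) : ℝ) - 1) / #(inducedEdges E (componentVertices c)) ≤
        ((#(endpoints F) : ℝ) - numComponents F) / #F := by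
  have := nonempty_connectedComponent_edgeSubgraph hF
  obtain ⟨c, -, hc⟩ := exists_div_le_sum_div_sum univ_nonempty
    (fun c : (edgeSubgraph F).ConnectedComponent ↦ (#(componentVertices c) : ℝ) - 1)
    (b := fun c ↦ (#(inducedEdges E (componentVertices c)) : ℝ))
    fun c _ ↦ Nat.cast_pos.2 (inducedEdges_componentVertices_nonempty hFE c).card_pos
  refine ⟨c, hc.trans ?_⟩
  rw [← sum_card_componentVertices_sub_one]
  exact div_le_div_of_nonneg_left
    (sum_nonneg fun c _ ↦ card_sub_one_nonneg (componentVertices_nonempty c))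
    (Nat.cast_pos.2 hF.card_pos)
    (mod_cast card_le_sum_card_inducedEdges_componentVertices hFE)

theorem isCoinitialFor_edgeSetRatios_subsetRatios (E : Set (Sym2 V)) :
    IsCoinitialFor (edgeSetRatios E) (subsetRatios E) := by
  rintro _ ⟨F, hFE, hF, rfl⟩
  obtain ⟨c, hc⟩ := exists_componentVertices_ratio_le hFE hF
  exact ⟨_, ⟨componentVertices c, componentVertices_nonempty c,
    inducedEdges_componentVertices_nonempty hFE c, rfl⟩, hc⟩

theorem isCoinitialFor_subsetRatios_edgeSetRatios (E : Set (Sym2 V)) :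
    IsCoinitialFor (subsetRatios E) (edgeSetRatios E) := by
  rintro _ ⟨S, -, hES, rfl⟩
  refine ⟨_, ⟨inducedEdges E S, fun e he ↦ (mem_inducedEdges.1 he).1, hES, rfl⟩, ?_⟩
  gcongr
  · exact endpoints_inducedEdges_subset
  · exact Nat.one_le_cast.2 (numComponents_pos hES)

theorem zero_mem_lowerBounds_subsetRatios (E : Set (Sym2 V)) :
    0 ∈ lowerBounds (subsetRatios E) := by
  rintro _ ⟨S, hS, -, rfl⟩
  exact div_nonneg (card_sub_one_nonneg hS) (Nat.cast_nonneg _)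

theorem edgeSetRatios_nonempty (hE : E.Nonempty) : (edgeSetRatios E).Nonempty := by
  obtain ⟨e, he⟩ := hE
  exact ⟨_, {e}, by simpa using he, singleton_nonempty e, rfl⟩

theorem filter_edgeFinset_eq_inducedEdges (G : SimpleGraph V) [Fintype G.edgeSet] (S : Finset V)
    [DecidablePred fun e : Sym2 V ↦ ∀ v ∈ e, v ∈ S] :
    G.edgeFinset.filter (fun e ↦ ∀ v ∈ e, v ∈ S) = inducedEdges G.edgeSet S := by
  ext e
  rw [mem_filter, SimpleGraph.mem_edgeFinset, mem_inducedEdges]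

theorem filter_univ_eq_endpoints [Fintype V] (F : Finset (Sym2 V))
    [DecidablePred fun v : V ↦ ∃ e ∈ F, v ∈ e] :
    univ.filter (fun v : V ↦ ∃ e ∈ F, v ∈ e) = endpoints F := by
  ext v
  rw [mem_filter_univ, mem_endpoints]

end

/-- For infinite `E` the infimum need not be attained, so this is stated with `IsGLB`. -/
theorem min_subset_ratio_eq_min_edgeset_ratio_general {V : Type*} {E : Set (Sym2 V)}
    (hE : E.Nonempty) :
    ∃ m : ℝ, IsGLB (subsetRatios E) m ∧ IsGLB (edgeSetRatios E) m := by
  have hlower : lowerBounds (edgeSetRatios E) = lowerBounds (subsetRatios E) :=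
    (lowerBounds_mono_of_isCoinitialFor (isCoinitialFor_subsetRatios_edgeSetRatios E)).antisymm
      (lowerBounds_mono_of_isCoinitialFor (isCoinitialFor_edgeSetRatios_subsetRatios E))
  have hglb : IsGLB (edgeSetRatios E) (sInf (edgeSetRatios E)) :=
    isGLB_csInf (edgeSetRatios_nonempty hE)
      ⟨0, hlower.symm ▸ zero_mem_lowerBounds_subsetRatios E⟩
  exact ⟨_, (isGLB_congr hlower).1 hglb, hglb⟩

/-- For any finite graph `G = (V,E)` with at least one edge,
`min_{S ⊆ V, E(S) ≠ ∅} (|S|−1)/|E(S)| = min_{∅ ≠ F ⊆ E} (|V(F)|−c(F))/|F|`,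
where `V(F)` is the set of endpoints of edges of `F` and `c(F)` the number of
connected components of `(V(F), F)`. -/
theorem min_subset_ratio_eq_min_edgeset_ratio
    {V : Type*} [Fintype V] [DecidableEq V]
    (G : SimpleGraph V) [DecidableRel G.Adj] (hE : G.edgeFinset.Nonempty) :
    sInf {r : ℝ | ∃ S : Finset V, S.Nonempty ∧
        (G.edgeFinset.filter (fun e => ∀ v ∈ e, v ∈ S)).Nonempty ∧
        r = ((S.card : ℝ) - 1) / ((G.edgeFinset.filter (fun e => ∀ v ∈ e, v ∈ S)).card)}
      = sInf {r : ℝ | ∃ F : Finset (Sym2 V), F ⊆ G.edgeFinset ∧ F.Nonempty ∧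
        r = (((Finset.univ.filter (fun v : V => ∃ e ∈ F, v ∈ e)).card : ℝ)
              - numComponents F) / (F.card : ℝ)} := by
  obtain ⟨m, hsubset, hedgeSet⟩ :=
    min_subset_ratio_eq_min_edgeset_ratio_general (Set.toFinset_nonempty.1 hE)
  simp only [filter_edgeFinset_eq_inducedEdges, filter_univ_eq_endpoints, ← coe_subset,
    SimpleGraph.coe_edgeFinset]
  exact (hsubset.csInf_eq hsubset.nonempty).trans (hedgeSet.csInf_eq hedgeSet.nonempty).symm
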